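/- Let μ, μ_n ∈ M_O (n ≥ 1). For A ⊆ O define S(A) = {λx : x ∈ A, λ ≥ 1}, and let 𝒜_μ be the collection of Borel sets A ⊆ O that are bounded away from C, satisfy μ(∂A) = 0, and satisfy S(A) = A. If μ_n(A) → μ(A) for every A ∈ 𝒜_μ, then μ_n → μ in M_O. -/

import Mathlib

open MeasureTheory Metric Filter Topology Set ENNReal

noncomputable section

variable {S : Type*} [MetricSpace S] [MeasurableSpace S]

/-- `A` is bounded away from `C`: `A ⊆ S \ C^r` for some `r > 0`. -/
def BddAway (C A : Set S) : Prop := ∃ r > 0, ∀ x ∈ A, r ≤ infDist x C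

/-- The class `C_O` of test functions: bounded, nonnegative, continuous on `O = S \ C`,
and vanishing on `C^r` for some `r > 0` (extended by `0` to all of `S`). -/
def IsCO (C : Set S) (f : S → ℝ) : Prop :=
  ContinuousOn f Cᶜ ∧ (∀ x, 0 ≤ f x) ∧ (∃ B : ℝ, ∀ x, f x ≤ B) ∧
    ∃ r > 0, ∀ x, infDist x C < r → f x = 0

/-- The class `M_O`: Borel measures on `O = S \ C` (i.e. giving no mass to `C`)
that are finite on `S \ C^r` for each `r > 0`. -/
def MemMO (C : Set S) (μ : Measure S) : Prop :=
  μ C = 0 ∧ ∀ r : ℝ, 0 < r → μ {x | r ≤ infDist x C} < ⊤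

/-- Convergence `μ_n → μ` in `M_O`. -/
def MOTendsto (C : Set S) (μn : ℕ → Measure S) (μ : Measure S) : Prop :=
  ∀ f : S → ℝ, IsCO C f →
    Tendsto (fun n => ∫ x, f x ∂ μn n) atTop (𝓝 (∫ x, f x ∂ μ))

/-- Axioms (A1)–(A3) for a scalar multiplication `(0,∞) × S → S`, together with the
requirement that `C` be a cone. -/
def ScaleAxioms (C : Set S) (sm : ℝ → S → S) : Prop :=
  ContinuousOn (fun p : ℝ × S => sm p.1 p.2) (Set.Ioi (0:ℝ) ×ˢ Set.univ) ∧
  (∀ x, sm 1 x = x) ∧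
  (∀ l₁ l₂ : ℝ, 0 < l₁ → 0 < l₂ → ∀ x, sm l₁ (sm l₂ x) = sm (l₁ * l₂) x) ∧
  (∀ l : ℝ, 1 < l → ∀ x ∈ Cᶜ, infDist x C < infDist (sm l x) C) ∧
  (∀ x ∈ C, ∀ l : ℝ, 0 < l → sm l x ∈ C)

/-!
The differences `A \ B` of members of `𝒜_μ` form a π-system, and convergence of measures passes to
finite unions of them by inclusion–exclusion. They contain a neighbourhood basis of every `x ∉ C`:
from `{t < d(·, C)}` remove the upward hull of `{y | a < d(y, C), e < d(y, x)}` with `a < t`. This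
hull misses `x`, because `cx` is close to `x` for `c ≤ 1` near `1`, while by (A3) it has already
dropped to distance at most `a` from `C` for smaller `c`. Varying `a`, `e` and `t` gives nested
families, whose boundaries are disjoint, so that all but countably many of them are `μ`-null.
Hence `μ G ≤ liminf μ_n G` for every open `G ⊆ O`, and the portmanteau argument applies to the
finite restrictions of the measures to a set `{t < d(·, C)}` outside which the test function
vanishes.
-/

lemma isPiSystem_image2_sdiff {X : Type*} {𝒜 : Set (Set X)} (h𝒜 : IsSublattice 𝒜) :
    IsPiSystem (image2 (· \ ·) 𝒜 𝒜) := by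
  rintro _ ⟨A, hA, B, hB, rfl⟩ _ ⟨A', hA', B', hB', rfl⟩ -
  refine ⟨A ∩ A', h𝒜.infClosed hA hA', B ∪ B', h𝒜.supClosed hB hB', ?_⟩
  ext
  simp only [Set.mem_sdiff, mem_inter_iff, mem_union]
  tauto

lemma tendsto_of_eventually_lt_of_tendsto_add {ι : Type*} {l : Filter ι} {p q : ι → ℝ} {a b : ℝ}
    (hp : ∀ c < a, ∀ᶠ i in l, c < p i) (hq : ∀ c < b, ∀ᶠ i in l, c < q i)
    (hpq : Tendsto (fun i => p i + q i) l (𝓝 (a + b))) : Tendsto p l (𝓝 a) := by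
  refine tendsto_order.2 ⟨hp, fun c hc => ?_⟩
  filter_upwards [hq (b - (c - a) / 2) (by linarith),
    hpq.eventually_lt_const (show a + b < a + b + (c - a) / 2 by linarith)] with i hqi hsum
  linarith

section ConvergenceOfMeasures

variable {X ι : Type*} [MeasurableSpace X]

lemma countable_setOf_measure_frontier_pos [TopologicalSpace X] [OpensMeasurableSpace X]
    {ν : Measure X} {B : ℝ → Set X} {u v : ℝ} (hfin : ν (B u) ≠ ∞)
    (hB : ∀ s t, u ≤ s → s < t → t < v → closure (B t) ⊆ interior (B s)) :
    {s : Ioo u v | 0 < ν (frontier (B s))}.Countable := by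
  have disjoint_of_lt : ∀ s t : Ioo u v, s < t → Disjoint (frontier (B s)) (frontier (B t)) :=
    fun s t hst => disjoint_sdiff_left.mono_right
      (frontier_subset_closure.trans (hB s t s.2.1.le hst t.2.2))
  refine Measure.countable_meas_pos_of_disjoint_of_meas_iUnion_ne_top ν
    (fun _ => isClosed_frontier.measurableSet) (fun s t hst => ?_)
    (measure_ne_top_of_subset (iUnion_subset fun s => ?_) hfin)
  · rcases hst.lt_or_gt with hlt | hgt
    · exact disjoint_of_lt s t hlt
    · exact (disjoint_of_lt t s hgt).symm
  · exact frontier_subset_closure.trans ((hB u s le_rfl s.2.1 s.2.2).trans interior_subset)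

lemma exists_mem_Ioo_measure_frontier_eq_zero [TopologicalSpace X] [OpensMeasurableSpace X]
    {ν : Measure X} {B : ℝ → Set X} {u v : ℝ} (huv : u < v) (hfin : ν (B u) ≠ ∞)
    (hB : ∀ s t, u ≤ s → s < t → t < v → closure (B t) ⊆ interior (B s)) :
    ∃ s ∈ Ioo u v, ν (frontier (B s)) = 0 := by
  have hcount := (countable_setOf_measure_frontier_pos hfin hB).image Subtype.val
  obtain ⟨s, hs, hsuv⟩ := (hcount.dense_compl ℝ).exists_between huv
  exact ⟨s, hsuv, nonpos_iff_eq_zero.1 (not_lt.1 fun hpos => hs ⟨⟨s, hsuv⟩, hpos, rfl⟩)⟩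

lemma tendsto_measureReal_sdiff {𝒜 : Set (Set X)} (hinf : InfClosed 𝒜)
    (hmeas : ∀ A ∈ 𝒜, MeasurableSet A) {ν : Measure X} {νs : ι → Measure X} {l : Filter ι}
    (hν : ∀ A ∈ 𝒜, ν A ≠ ∞) (hνs : ∀ A ∈ 𝒜, ∀ i, νs i A ≠ ∞)
    (h : ∀ A ∈ 𝒜, Tendsto (fun i => (νs i).real A) l (𝓝 (ν.real A)))
    {A B : Set X} (hA : A ∈ 𝒜) (hB : B ∈ 𝒜) :
    Tendsto (fun i => (νs i).real (A \ B)) l (𝓝 (ν.real (A \ B))) := by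
  have hAB : A ∩ B ∈ 𝒜 := hinf hA hB
  have real_sdiff : ∀ ρ : Measure X, ρ A ≠ ∞ → ρ.real (A \ B) = ρ.real A - ρ.real (A ∩ B) :=
    fun ρ hρ => by
      rw [← sdiff_self_inter, measureReal_sdiff inter_subset_left (hmeas _ hAB) hρ]
  simp_rw [real_sdiff ν (hν A hA), fun i => real_sdiff (νs i) (hνs A hA i)]
  exact (h A hA).sub (h _ hAB)

lemma measure_le_liminf_of_isPiSystem [TopologicalSpace X] [SecondCountableTopology X]
    {𝒮 : Set (Set X)} (h𝒮 : IsPiSystem 𝒮) (hmeas : ∀ s ∈ 𝒮, MeasurableSet s)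
    {ν : Measure X} {νs : ι → Measure X} {l : Filter ι} [l.NeBot]
    (hν : ∀ s ∈ 𝒮, ν s ≠ ∞) (hνs : ∀ s ∈ 𝒮, ∀ i, νs i s ≠ ∞)
    (h : ∀ s ∈ 𝒮, Tendsto (fun i => (νs i).real s) l (𝓝 (ν.real s)))
    {G : Set X} (hG : ∀ x ∈ G, ∃ s ∈ 𝒮, s ∈ 𝓝 x ∧ s ⊆ G) :
    ν G ≤ l.liminf fun i => νs i G := by
  classical
  choose! s hs𝒮 hsnhds hsG using hG
  obtain ⟨t, htG, htc, hcover⟩ := TopologicalSpace.countable_cover_nhdsWithin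
    fun x hx => mem_nhdsWithin_of_mem_nhds (hsnhds x hx)
  have := htc.to_subtype
  have tendsto_finite_union : ∀ F : Finset t, Tendsto (fun i => νs i (⋃ x ∈ F, s x)) l
      (𝓝 (ν (⋃ x ∈ F, s x))) := fun F => by
    have hF : ∀ a ∈ F.image (fun x : t => s x), a ∈ 𝒮 := by
      simpa only [Finset.forall_mem_image] using fun (x : t) _ => hs𝒮 x (htG x.2)
    have hlim := h𝒮.tendsto_measureReal_biUnion hF hmeas h hν hνs
    have ne_top : ∀ ρ : Measure X, (∀ a ∈ 𝒮, ρ a ≠ ∞) → ρ (⋃ x ∈ F, s x) ≠ ∞ := fun ρ hρ =>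
      (measure_biUnion_lt_top (s := F) (f := fun x : t => s x) F.finite_toSet
        fun x _ => (hρ _ (hs𝒮 x (htG x.2))).lt_top).ne
    rw [Finset.set_biUnion_finset_image] at hlim
    exact (ENNReal.tendsto_toReal_iff (fun i => ne_top _ fun a ha => hνs a ha i)
      (ne_top ν hν)).1 hlim
  calc ν G ≤ ν (⋃ F : Finset t, ⋃ x ∈ F, s x) :=
        measure_mono (by rwa [← iUnion_eq_iUnion_finset, ← biUnion_eq_iUnion t fun x _ => s x])
    _ = ⨆ F : Finset t, ν (⋃ x ∈ F, s x) := Directed.measure_iUnion <|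
        directed_of_isDirected_le fun _ _ hFF' => biUnion_subset_biUnion_left hFF'
    _ ≤ l.liminf fun i => νs i G := iSup_le fun F => by
        rw [← (tendsto_finite_union F).liminf_eq]
        exact liminf_le_liminf (.of_forall fun i => measure_mono
          (iUnion₂_subset fun (x : t) _ => hsG x (htG x.2)))

variable [TopologicalSpace X] [OpensMeasurableSpace X] {f : X → ℝ} {M : ℝ}

lemma integrable_of_continuous_of_nonneg_of_le (ρ : Measure X) [IsFiniteMeasure ρ]
    (hf : Continuous f) (hf0 : 0 ≤ f) (hfM : ∀ x, f x ≤ M) : Integrable f ρ :=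
  .of_bound hf.measurable.aestronglyMeasurable M <| .of_forall fun x => by
    rw [Real.norm_of_nonneg (hf0 x)]
    exact hfM x

variable {ν : Measure X} {νs : ℕ → Measure X} [IsFiniteMeasure ν] [∀ n, IsFiniteMeasure (νs n)]

lemma eventually_lt_integral_of_forall_isOpen_le_liminf (hf : Continuous f) (hf0 : 0 ≤ f)
    (hfM : ∀ x, f x ≤ M) (hopen : ∀ G, IsOpen G → ν G ≤ atTop.liminf fun n => νs n G)
    {c : ℝ} (hc : c < ∫ x, f x ∂ν) : ∀ᶠ n in atTop, c < ∫ x, f x ∂νs n := by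
  have lintegral_eq : ∀ (ρ : Measure X) [IsFiniteMeasure ρ],
      ∫⁻ x, ENNReal.ofReal (f x) ∂ρ = ENNReal.ofReal (∫ x, f x ∂ρ) := fun ρ _ =>
    (ofReal_integral_eq_lintegral_ofReal (integrable_of_continuous_of_nonneg_of_le ρ hf hf0 hfM)
      (.of_forall hf0)).symm
  rcases lt_or_ge c 0 with hneg | hnonneg
  · exact .of_forall fun n => hneg.trans_le (integral_nonneg hf0)
  have hle := lintegral_le_liminf_lintegral_of_forall_isOpen_measure_le_liminf_measure
    hf hf0 hopen
  simp_rw [lintegral_eq] at hle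
  have hlt := ((ENNReal.ofReal_lt_ofReal_iff (hnonneg.trans_lt hc)).2 hc).trans_le hle
  filter_upwards [eventually_lt_of_lt_liminf hlt] with n hn
  exact (ENNReal.ofReal_lt_ofReal_iff_of_nonneg hnonneg).1 hn

lemma tendsto_integral_of_forall_isOpen_le_liminf (hf : Continuous f) (hf0 : 0 ≤ f)
    (hfM : ∀ x, f x ≤ M) (hopen : ∀ G, IsOpen G → ν G ≤ atTop.liminf fun n => νs n G)
    (hmass : Tendsto (fun n => (νs n).real univ) atTop (𝓝 (ν.real univ))) :
    Tendsto (fun n => ∫ x, f x ∂νs n) atTop (𝓝 (∫ x, f x ∂ν)) := by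
  have integral_add_sub : ∀ (ρ : Measure X) [IsFiniteMeasure ρ],
      ∫ x, f x ∂ρ + ∫ x, (M - f x) ∂ρ = M * ρ.real univ := fun ρ _ => by
    rw [integral_sub (integrable_const M)
      (integrable_of_continuous_of_nonneg_of_le ρ hf hf0 hfM), integral_const, smul_eq_mul]
    ring
  refine tendsto_of_eventually_lt_of_tendsto_add (q := fun n => ∫ x, (M - f x) ∂νs n)
    (b := ∫ x, (M - f x) ∂ν)
    (fun c => eventually_lt_integral_of_forall_isOpen_le_liminf hf hf0 hfM hopen)
    (fun c => eventually_lt_integral_of_forall_isOpen_le_liminf (f := fun x => M - f x)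
      (continuous_const.sub hf) (fun x => sub_nonneg.2 (hfM x)) (fun x => sub_le_self M (hf0 x))
      hopen) ?_
  simp_rw [integral_add_sub]
  exact hmass.const_mul M

end ConvergenceOfMeasures

/-- The set `S(A) = {λx : x ∈ A, λ ≥ 1}` swept out by `A` under scaling up. -/
def upHull {X : Type*} (sm : ℝ → X → X) (A : Set X) : Set X :=
  {y | ∃ x ∈ A, ∃ l : ℝ, 1 ≤ l ∧ y = sm l x}

lemma upHull_mono {X : Type*} {sm : ℝ → X → X} {A B : Set X} (h : A ⊆ B) :
    upHull sm A ⊆ upHull sm B :=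
  fun _ ⟨x, hx, hy⟩ => ⟨x, h hx, hy⟩

section Distance

variable {X : Type*} [PseudoMetricSpace X] (C : Set X)

lemma isOpen_setOf_lt_infDist (a : ℝ) : IsOpen {y | a < infDist y C} :=
  isOpen_lt continuous_const (continuous_infDist_pt C)

lemma isClosed_setOf_le_infDist (a : ℝ) : IsClosed {y | a ≤ infDist y C} :=
  isClosed_le continuous_const (continuous_infDist_pt C)

lemma closure_setOf_lt_infDist_subset (a : ℝ) :
    closure {y | a < infDist y C} ⊆ {y | a ≤ infDist y C} :=
  closure_lt_subset_le continuous_const (continuous_infDist_pt C)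

/-- The points at distance more than `a` from `C` and more than `e` from `x`. Their `upHull` is
what has to be removed from `{y | a < infDist y C}` to leave only points near `x`. -/
def farSet (x : X) (a e : ℝ) : Set X := {y | a < infDist y C ∧ e < dist y x}

lemma isOpen_farSet (x : X) (a e : ℝ) : IsOpen (farSet C x a e) :=
  (isOpen_setOf_lt_infDist C a).inter
    (isOpen_lt continuous_const (continuous_id.dist continuous_const))

variable {C} in
lemma closure_farSet_subset {x : X} {a a' e e' : ℝ} (ha : a' < a) (he : e' < e) :
    closure (farSet C x a e) ⊆ farSet C x a' e' := by
  have hclosed : IsClosed {y | a ≤ infDist y C ∧ e ≤ dist y x} :=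
    (isClosed_setOf_le_infDist C a).inter
      (isClosed_le continuous_const (continuous_id.dist continuous_const))
  have hsub : farSet C x a e ⊆ {y | a ≤ infDist y C ∧ e ≤ dist y x} :=
    fun y hy => ⟨hy.1.le, hy.2.le⟩
  exact (closure_minimal hsub hclosed).trans fun y hy => ⟨ha.trans_le hy.1, he.trans_le hy.2⟩

end Distance

namespace ScaleAxioms

variable {X : Type*} [MetricSpace X] {C : Set X} {sm : ℝ → X → X}

lemma one_smul (hsm : ScaleAxioms C sm) (x : X) : sm 1 x = x := hsm.2.1 x

lemma smul_smul (hsm : ScaleAxioms C sm) {c l : ℝ} (hc : 0 < c) (hl : 0 < l) (x : X) :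
    sm c (sm l x) = sm (c * l) x :=
  hsm.2.2.1 c l hc hl x

lemma inv_smul_smul (hsm : ScaleAxioms C sm) {c : ℝ} (hc : 0 < c) (x : X) :
    sm c⁻¹ (sm c x) = x := by
  rw [hsm.smul_smul (inv_pos.2 hc) hc, inv_mul_cancel₀ hc.ne', hsm.one_smul]

lemma continuousAt_smul (hsm : ScaleAxioms C sm) {c : ℝ} (hc : 0 < c) (x : X) :
    ContinuousAt (fun p : ℝ × X => sm p.1 p.2) (c, x) :=
  hsm.1.continuousAt ((isOpen_Ioi.prod isOpen_univ).mem_nhds ⟨hc, mem_univ x⟩)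

lemma continuous_const_smul (hsm : ScaleAxioms C sm) {c : ℝ} (hc : 0 < c) : Continuous (sm c) :=
  continuous_iff_continuousAt.2 fun x =>
    (hsm.continuousAt_smul hc x).comp (Continuous.prodMk_right c).continuousAt

lemma infDist_le_infDist_smul (hsm : ScaleAxioms C sm) (x : X) {l : ℝ} (hl : 1 ≤ l) :
    infDist x C ≤ infDist (sm l x) C := by
  rcases hl.eq_or_lt with rfl | hl
  · rw [hsm.one_smul]
  · by_cases hx : x ∈ C
    · rw [infDist_zero_of_mem hx]
      exact infDist_nonneg
    · exact (hsm.2.2.2.1 l hl x hx).le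

lemma infDist_smul_le_infDist_smul (hsm : ScaleAxioms C sm) (x : X) {c c' : ℝ} (hc : 0 < c)
    (hcc' : c ≤ c') : infDist (sm c x) C ≤ infDist (sm c' x) C := by
  have hle := hsm.infDist_le_infDist_smul (sm c x) ((one_le_div hc).2 hcc')
  rwa [hsm.smul_smul (div_pos (hc.trans_le hcc') hc) hc, div_mul_cancel₀ _ hc.ne'] at hle

lemma infDist_smul_lt (hsm : ScaleAxioms C sm) {x : X} (hx : x ∉ C) {c : ℝ} (hc : 0 < c)
    (hc1 : c < 1) : infDist (sm c x) C < infDist x C := by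
  have hcx : sm c x ∉ C := fun hmem =>
    hx (hsm.inv_smul_smul hc x ▸ hsm.2.2.2.2 _ hmem c⁻¹ (inv_pos.2 hc))
  simpa only [hsm.inv_smul_smul hc] using hsm.2.2.2.1 c⁻¹ ((one_lt_inv₀ hc).2 hc1) _ hcx

lemma exists_forall_Ioc_dist_smul_lt (hsm : ScaleAxioms C sm) (x : X) {b e : ℝ} (hb : b < 1)
    (he : 0 < e) : ∃ c₀ ∈ Ico b 1, ∀ c ∈ Ioc c₀ 1, dist (sm c x) x < e := by
  have hlim : Tendsto (fun c : ℝ => sm c x) (𝓝 1) (𝓝 x) := by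
    simpa only [hsm.one_smul, Function.comp_def, id_eq] using
      (hsm.continuousAt_smul one_pos x).tendsto.comp (tendsto_id.prodMk_nhds tendsto_const_nhds)
  exact (mem_nhdsLE_iff_exists_mem_Ico_Ioc_subset hb).1
    (mem_nhdsWithin_of_mem_nhds (hlim (ball_mem_nhds x he)))

lemma isClosed_setOf_exists_smul_mem (hsm : ScaleAxioms C sm) {K : Set ℝ} (hK : IsCompact K)
    (hK0 : K ⊆ Ioi 0) {F : Set X} (hF : IsClosed F) : IsClosed {w | ∃ c ∈ K, sm c w ∈ F} := by
  have := isCompact_iff_compactSpace.1 hK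
  have hcont : Continuous fun p : K × X => sm p.1 p.2 := continuous_iff_continuousAt.2 fun p =>
    (hsm.continuousAt_smul (hK0 p.1.2) p.2).comp (f := Prod.map Subtype.val id)
      (continuous_subtype_val.prodMap continuous_id).continuousAt
  convert isClosedMap_snd_of_compactSpace _ (hF.preimage hcont) using 1
  ext w
  simp

lemma mem_upHull_iff (hsm : ScaleAxioms C sm) {A : Set X} {y : X} :
    y ∈ upHull sm A ↔ ∃ c ∈ Ioc (0 : ℝ) 1, sm c y ∈ A := by
  constructor
  · rintro ⟨x, hx, l, hl, rfl⟩
    have hl0 := one_pos.trans_le hl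
    exact ⟨l⁻¹, ⟨inv_pos.2 hl0, inv_le_one_of_one_le₀ hl⟩, by rwa [hsm.inv_smul_smul hl0]⟩
  · rintro ⟨c, ⟨hc, hc1⟩, hcy⟩
    exact ⟨sm c y, hcy, c⁻¹, (one_le_inv₀ hc).2 hc1, (hsm.inv_smul_smul hc y).symm⟩

lemma subset_upHull (hsm : ScaleAxioms C sm) (A : Set X) : A ⊆ upHull sm A :=
  fun x hx => ⟨x, hx, 1, le_rfl, (hsm.one_smul x).symm⟩

lemma upHull_eq_self_iff (hsm : ScaleAxioms C sm) {A : Set X} :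
    upHull sm A = A ↔ ∀ x ∈ A, ∀ l : ℝ, 1 ≤ l → sm l x ∈ A := by
  constructor
  · intro hA x hx l hl
    exact hA ▸ ⟨x, hx, l, hl, rfl⟩
  · intro hA
    refine subset_antisymm ?_ (hsm.subset_upHull A)
    rintro _ ⟨x, hx, l, hl, rfl⟩
    exact hA x hx l hl

lemma upHull_upHull (hsm : ScaleAxioms C sm) (A : Set X) :
    upHull sm (upHull sm A) = upHull sm A := by
  refine hsm.upHull_eq_self_iff.2 ?_
  rintro _ ⟨x, hx, l, hl, rfl⟩ l' hl'
  exact ⟨x, hx, l' * l, one_le_mul_of_one_le_of_one_le hl' hl,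
    hsm.smul_smul (one_pos.trans_le hl') (one_pos.trans_le hl) x⟩

lemma upHull_setOf_lt_infDist (hsm : ScaleAxioms C sm) (a : ℝ) :
    upHull sm {y | a < infDist y C} = {y | a < infDist y C} :=
  hsm.upHull_eq_self_iff.2 fun x hx _ hl => lt_of_lt_of_le hx (hsm.infDist_le_infDist_smul x hl)

lemma isOpen_upHull (hsm : ScaleAxioms C sm) {U : Set X} (hU : IsOpen U) :
    IsOpen (upHull sm U) := by
  have heq : upHull sm U = ⋃ c ∈ Ioc (0 : ℝ) 1, sm c ⁻¹' U := by
    ext y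
    simp only [hsm.mem_upHull_iff, mem_iUnion, mem_preimage, exists_prop]
  rw [heq]
  exact isOpen_biUnion fun c hc => hU.preimage (hsm.continuous_const_smul hc.1)

-- Near `w`, only factors in the compact interval `[c₀, 1]` can scale a point into `U`.
lemma mem_upHull_closure (hsm : ScaleAxioms C sm) {U : Set X} {a c₀ : ℝ} {w : X}
    (hU : U ⊆ {y | a < infDist y C}) (hc₀ : 0 < c₀) (hw : infDist (sm c₀ w) C < a)
    (hmem : w ∈ closure (upHull sm U)) : w ∈ upHull sm (closure U) := by
  have hnear : IsOpen {z | infDist (sm c₀ z) C < a} :=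
    isOpen_lt ((continuous_infDist_pt C).comp (hsm.continuous_const_smul hc₀)) continuous_const
  have hclosed : IsClosed {z | ∃ c ∈ Icc c₀ 1, sm c z ∈ closure U} :=
    hsm.isClosed_setOf_exists_smul_mem isCompact_Icc (fun c hc => hc₀.trans_le hc.1)
      isClosed_closure
  have hsub : {z | infDist (sm c₀ z) C < a} ∩ upHull sm U ⊆
      {z | ∃ c ∈ Icc c₀ 1, sm c z ∈ closure U} := by
    rintro z ⟨hz, hzU⟩
    obtain ⟨c, ⟨hc, hc1⟩, hcz⟩ := hsm.mem_upHull_iff.1 hzU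
    refine ⟨c, ⟨le_of_not_ge fun hle => ?_, hc1⟩, subset_closure hcz⟩
    exact (hU hcz).not_ge ((hsm.infDist_smul_le_infDist_smul z hc hle).trans hz.le)
  obtain ⟨c, ⟨hc, hc1⟩, hcw⟩ :=
    closure_minimal hsub hclosed (hnear.inter_closure ⟨hw, hmem⟩)
  exact hsm.mem_upHull_iff.2 ⟨c, ⟨hc₀.trans_le hc, hc1⟩, hcw⟩

lemma upHull_farSet_subset (hsm : ScaleAxioms C sm) (x : X) (a e : ℝ) :
    upHull sm (farSet C x a e) ⊆ {y | a < infDist y C} :=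
  (upHull_mono fun _ hy => hy.1).trans (hsm.upHull_setOf_lt_infDist a).subset

lemma notMem_upHull_farSet (hsm : ScaleAxioms C sm) {x : X} {a e c₀ : ℝ}
    (hc₀ : infDist (sm c₀ x) C ≤ a) (hnear : ∀ c ∈ Ioc c₀ 1, dist (sm c x) x ≤ e) :
    x ∉ upHull sm (farSet C x a e) := by
  rw [hsm.mem_upHull_iff]
  rintro ⟨c, ⟨hc, hc1⟩, hac, hec⟩
  rcases le_or_gt c c₀ with hle | hlt
  · exact hac.not_ge ((hsm.infDist_smul_le_infDist_smul x hc hle).trans hc₀)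
  · exact hec.not_ge (hnear c ⟨hlt, hc1⟩)

lemma closure_upHull_farSet_subset (hsm : ScaleAxioms C sm) {x : X} {a a' e e' c₀ ρ : ℝ}
    (hc₀ : 0 < c₀) (hρ : ∀ z ∈ ball x ρ, infDist (sm c₀ z) C < a) (ha : a' < a) (he : e' < e)
    (heρ : e' < ρ) :
    closure (upHull sm (farSet C x a e)) ⊆ upHull sm (farSet C x a' e') := by
  intro w hw
  rcases lt_or_ge e' (dist w x) with hfar | hnear
  · have haw : a ≤ infDist w C :=
      closure_setOf_lt_infDist_subset C a (closure_mono (hsm.upHull_farSet_subset x a e) hw)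
    exact hsm.subset_upHull _ ⟨ha.trans_le haw, hfar⟩
  · exact upHull_mono (closure_farSet_subset ha he) <|
      hsm.mem_upHull_closure (fun _ hy => hy.1) hc₀ (hρ w (hnear.trans_lt heρ)) hw

lemma exists_upHull_farSet_nested (hsm : ScaleAxioms C sm) {x : X} (hx : x ∉ C) {G : Set X}
    (hG : G ∈ 𝓝 x) : ∃ a > 0, ∃ e, ∃ δ > 0, a + δ ≤ infDist x C ∧ ball x (e + δ) ⊆ G ∧
      x ∉ upHull sm (farSet C x a e) ∧
      ∀ s t, 0 ≤ s → s < t → t < δ → closure (upHull sm (farSet C x (a + t) (e + t))) ⊆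
        upHull sm (farSet C x (a + s) (e + s)) := by
  have hhalf : (0 : ℝ) < 1 / 2 := by norm_num
  obtain ⟨a₁, ha₁, ha₁x⟩ := exists_between (hsm.infDist_smul_lt hx hhalf (by norm_num))
  obtain ⟨ρ, hρ, hball⟩ : ∃ ρ > 0, ball x ρ ⊆ {z | infDist (sm (1 / 2) z) C < a₁} ∩ G :=
    Metric.mem_nhds_iff.1 <| inter_mem
      (((continuous_infDist_pt C).comp (hsm.continuous_const_smul hhalf)).continuousAt.eventually_lt
        continuousAt_const ha₁) hG
  obtain ⟨c, ⟨hc, hc1⟩, hnear⟩ :=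
    hsm.exists_forall_Ioc_dist_smul_lt x (b := 1 / 2) (by norm_num) (half_pos hρ)
  have hcx := hsm.infDist_smul_lt hx (hhalf.trans_le hc) hc1
  obtain ⟨a, ha, hax⟩ := exists_between (max_lt ha₁x hcx)
  obtain ⟨haa₁, hac⟩ := max_lt_iff.1 ha
  have hδρ : min (ρ / 2) (infDist x C - a) ≤ ρ / 2 := min_le_left _ _
  have hδa : min (ρ / 2) (infDist x C - a) ≤ infDist x C - a := min_le_right _ _
  refine ⟨a, (infDist_nonneg.trans_lt ha₁).trans haa₁, ρ / 2,
    min (ρ / 2) (infDist x C - a), lt_min (half_pos hρ) (sub_pos.2 hax), by linarith,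
    (ball_subset_ball (by linarith)).trans (hball.trans inter_subset_right),
    hsm.notMem_upHull_farSet hac.le fun c' hc' => (hnear c' hc').le, fun s t hs hst ht => ?_⟩
  exact hsm.closure_upHull_farSet_subset hhalf
    (fun z hz => (hball hz).1.trans (by linarith)) (by linarith) (by linarith) (by linarith)

end ScaleAxioms

namespace BddAway

variable {X : Type*} [MetricSpace X] {C A B : Set X}

lemma mono (hB : BddAway C B) (h : A ⊆ B) : BddAway C A :=
  hB.imp fun _ hr => ⟨hr.1, fun x hx => hr.2 x (h hx)⟩

lemma union (hA : BddAway C A) (hB : BddAway C B) : BddAway C (A ∪ B) := by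
  obtain ⟨r, hr, hAr⟩ := hA
  obtain ⟨r', hr', hBr'⟩ := hB
  exact ⟨min r r', lt_min hr hr', fun x hx => hx.elim
    (fun hxA => (min_le_left r r').trans (hAr x hxA))
    fun hxB => (min_le_right r r').trans (hBr' x hxB)⟩

lemma subset_compl (hA : BddAway C A) : A ⊆ Cᶜ := by
  obtain ⟨r, hr, hAr⟩ := hA
  exact fun x hx hxC => (hr.trans_le (hAr x hx)).ne' (infDist_zero_of_mem hxC)

lemma measure_ne_top [MeasurableSpace X] {ν : Measure X} (hA : BddAway C A) (hν : MemMO C ν) :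
    ν A ≠ ∞ := by
  obtain ⟨r, hr, hAr⟩ := hA
  exact measure_ne_top_of_subset hAr (hν.2 r hr).ne

end BddAway

lemma bddAway_setOf_lt_infDist {X : Type*} [MetricSpace X] (C : Set X) {a : ℝ} (ha : 0 < a) :
    BddAway C {y | a < infDist y C} :=
  ⟨a, ha, fun _ hx => le_of_lt hx⟩

lemma IsCO.continuous {X : Type*} [MetricSpace X] {C : Set X} {f : X → ℝ} (hf : IsCO C f) :
    Continuous f := by
  obtain ⟨hcont, -, -, r, hr, hzero⟩ := hf
  refine continuous_iff_continuousAt.2 fun x => ?_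
  rcases lt_or_ge (infDist x C) r with hlt | hge
  · have heq : f =ᶠ[𝓝 x] fun _ => 0 :=
      ((continuous_infDist_pt C).continuousAt.eventually_lt continuousAt_const hlt).mono hzero
    exact continuousAt_const.congr heq.symm
  · have hx : x ∉ closure C := fun hmem =>
      (hr.trans_le hge).ne' (infDist_zero_of_mem_closure hmem)
    exact hcont.continuousAt <| mem_of_superset (isClosed_closure.isOpen_compl.mem_nhds hx)
      (compl_subset_compl.2 subset_closure)

section ScalingContinuitySets

variable {X : Type*} [MetricSpace X] [MeasurableSpace X]

/-- The class `𝒜_μ` of measurable sets `A` bounded away from `C` with `μ (∂A) = 0` and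
`S(A) = A`, against which convergence is tested. -/
def scalingContinuitySets (C : Set X) (sm : ℝ → X → X) (μ : Measure X) : Set (Set X) :=
  {A | MeasurableSet A ∧ BddAway C A ∧ μ (frontier A) = 0 ∧ upHull sm A = A}

variable {C : Set X} {sm : ℝ → X → X} {μ : Measure X}

lemma isSublattice_scalingContinuitySets (hsm : ScaleAxioms C sm) :
    IsSublattice (scalingContinuitySets C sm μ) := by
  constructor
  · rintro A ⟨hA, hAC, hμA, hSA⟩ B ⟨hB, hBC, hμB, hSB⟩
    rw [hsm.upHull_eq_self_iff] at hSA hSB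
    refine ⟨hA.union hB, hAC.union hBC, measure_mono_null (frontier_union_subset A B) ?_,
      hsm.upHull_eq_self_iff.2 fun x hx l hl => hx.imp (hSA x · l hl) (hSB x · l hl)⟩
    exact measure_union_null (measure_mono_null inter_subset_left hμA)
      (measure_mono_null inter_subset_right hμB)
  · rintro A ⟨hA, hAC, hμA, hSA⟩ B ⟨hB, -, hμB, hSB⟩
    rw [hsm.upHull_eq_self_iff] at hSA hSB
    refine ⟨hA.inter hB, hAC.mono inter_subset_left,
      measure_mono_null (frontier_inter_subset A B) ?_,
      hsm.upHull_eq_self_iff.2 fun x hx l hl => ⟨hSA x hx.1 l hl, hSB x hx.2 l hl⟩⟩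
    exact measure_union_null (measure_mono_null inter_subset_left hμA)
      (measure_mono_null inter_subset_right hμB)

variable [OpensMeasurableSpace X]

lemma exists_setOf_lt_infDist_mem_scalingContinuitySets (hsm : ScaleAxioms C sm)
    (hμ : MemMO C μ) {u v : ℝ} (hu : 0 < u) (huv : u < v) :
    ∃ t ∈ Ioo u v, {y | t < infDist y C} ∈ scalingContinuitySets C sm μ := by
  have nested : ∀ s t, u ≤ s → s < t → t < v →
      closure {y | t < infDist y C} ⊆ interior {y | s < infDist y C} := fun s t _ hst _ => by
    rw [(isOpen_setOf_lt_infDist C s).interior_eq]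
    exact (closure_setOf_lt_infDist_subset C t).trans fun y hy => hst.trans_le hy
  obtain ⟨t, ht, hμt⟩ := exists_mem_Ioo_measure_frontier_eq_zero huv
    ((bddAway_setOf_lt_infDist C hu).measure_ne_top hμ) nested
  exact ⟨t, ht, (isOpen_setOf_lt_infDist C t).measurableSet,
    bddAway_setOf_lt_infDist C (hu.trans ht.1), hμt, hsm.upHull_setOf_lt_infDist t⟩

lemma exists_upHull_farSet_mem_scalingContinuitySets (hsm : ScaleAxioms C sm)
    (hμ : MemMO C μ) {x : X} (hx : x ∉ C) {G : Set X} (hG : G ∈ 𝓝 x) :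
    ∃ a > 0, ∃ e, a < infDist x C ∧ closedBall x e ⊆ G ∧
      upHull sm (farSet C x a e) ∈ scalingContinuitySets C sm μ ∧
      x ∉ closure (upHull sm (farSet C x a e)) := by
  obtain ⟨a, ha, e, δ, hδ, haδ, heG, hxa, hnested⟩ := hsm.exists_upHull_farSet_nested hx hG
  have isOpen_hull : ∀ a e, IsOpen (upHull sm (farSet C x a e)) := fun a e =>
    hsm.isOpen_upHull (isOpen_farSet C x a e)
  have bddAway_hull : ∀ a > 0, ∀ e, BddAway C (upHull sm (farSet C x a e)) := fun a ha e =>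
    (bddAway_setOf_lt_infDist C ha).mono (hsm.upHull_farSet_subset x a e)
  obtain ⟨s, ⟨hs, hsδ⟩, hμs⟩ := exists_mem_Ioo_measure_frontier_eq_zero (ν := μ)
    (B := fun s => upHull sm (farSet C x (a + s) (e + s))) hδ
    ((bddAway_hull _ (by linarith) _).measure_ne_top hμ) fun s t hs hst ht => by
      rw [(isOpen_hull _ _).interior_eq]
      exact hnested s t hs hst ht
  refine ⟨a + s, by linarith, e + s, by linarith,
    (closedBall_subset_ball (by linarith)).trans heG,
    ⟨(isOpen_hull _ _).measurableSet, bddAway_hull _ (by linarith) _, hμs, hsm.upHull_upHull _⟩,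
    fun hmem => hxa ?_⟩
  simpa only [add_zero] using hnested 0 s le_rfl hs hsδ hmem

lemma exists_sdiff_mem_nhds (hsm : ScaleAxioms C sm) (hμ : MemMO C μ) {x : X} (hx : x ∉ C)
    {G : Set X} (hG : G ∈ 𝓝 x) :
    ∃ A ∈ scalingContinuitySets C sm μ, ∃ B ∈ scalingContinuitySets C sm μ,
      A \ B ∈ 𝓝 x ∧ A \ B ⊆ G := by
  obtain ⟨a, ha, e, hax, heG, hB, hxB⟩ :=
    exists_upHull_farSet_mem_scalingContinuitySets hsm hμ hx hG
  obtain ⟨t, ⟨hat, htx⟩, hA⟩ := exists_setOf_lt_infDist_mem_scalingContinuitySets hsm hμ ha hax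
  refine ⟨_, hA, _, hB, ?_, fun y hy => heG ?_⟩
  · exact mem_of_superset
      (((isOpen_setOf_lt_infDist C t).sdiff isClosed_closure).mem_nhds ⟨htx, hxB⟩)
      (sdiff_subset_sdiff_right subset_closure)
  · exact le_of_not_gt fun hfar => hy.2 (hsm.subset_upHull _ ⟨hat.trans hy.1, hfar⟩)

variable [TopologicalSpace.SeparableSpace X] {μn : ℕ → Measure X}

lemma measure_le_liminf_of_isOpen_of_subset_compl (hsm : ScaleAxioms C sm) (hμ : MemMO C μ)
    (hμn : ∀ n, MemMO C (μn n))
    (h : ∀ A ∈ scalingContinuitySets C sm μ,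
      Tendsto (fun n => (μn n).real A) atTop (𝓝 (μ.real A)))
    {G : Set X} (hG : IsOpen G) (hGC : G ⊆ Cᶜ) : μ G ≤ atTop.liminf fun n => μn n G := by
  have := UniformSpace.secondCountable_of_separable X
  have ne_top : ∀ ρ : Measure X, MemMO C ρ → ∀ A ∈ scalingContinuitySets C sm μ, ρ A ≠ ∞ :=
    fun ρ hρ A hA => hA.2.1.measure_ne_top hρ
  refine measure_le_liminf_of_isPiSystem
    (isPiSystem_image2_sdiff (isSublattice_scalingContinuitySets (μ := μ) hsm)) ?_ ?_ ?_ ?_ ?_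
  · exact forall_mem_image2.2 fun A hA B hB => hA.1.diff hB.1
  · exact forall_mem_image2.2 fun A hA B _ =>
      measure_ne_top_of_subset sdiff_subset (ne_top μ hμ A hA)
  · exact forall_mem_image2.2 fun A hA B _ n =>
      measure_ne_top_of_subset sdiff_subset (ne_top _ (hμn n) A hA)
  · exact forall_mem_image2.2 fun A hA B hB =>
      tendsto_measureReal_sdiff (isSublattice_scalingContinuitySets hsm).infClosed
        (fun A hA => hA.1) (ne_top μ hμ) (fun A hA n => ne_top _ (hμn n) A hA) h hA hB
  · intro x hx
    obtain ⟨A, hA, B, hB, hnhds, hsub⟩ := exists_sdiff_mem_nhds hsm hμ (hGC hx) (hG.mem_nhds hx)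
    exact ⟨A \ B, mem_image2_of_mem hA hB, hnhds, hsub⟩

end ScalingContinuitySets

theorem stmt11_general [OpensMeasurableSpace S] [TopologicalSpace.SeparableSpace S]
    (C : Set S) (sm : ℝ → S → S) (hsm : ScaleAxioms C sm) (μ : Measure S) (μn : ℕ → Measure S)
    (hμ : MemMO C μ) (hμn : ∀ n, MemMO C (μn n))
    (h : ∀ A ∈ scalingContinuitySets C sm μ, Tendsto (fun n => μn n A) atTop (𝓝 (μ A))) :
    MOTendsto C μn μ := by
  intro f hf
  obtain ⟨-, hf0, ⟨M, hfM⟩, r, hr, hzero⟩ := id hf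
  have tendsto_real : ∀ A ∈ scalingContinuitySets C sm μ,
      Tendsto (fun n => (μn n).real A) atTop (𝓝 (μ.real A)) := fun A hA =>
    (ENNReal.tendsto_toReal (hA.2.1.measure_ne_top hμ)).comp (h A hA)
  obtain ⟨t, ⟨-, htr⟩, hD⟩ :=
    exists_setOf_lt_infDist_mem_scalingContinuitySets hsm hμ (half_pos hr) (half_lt_self hr)
  set D := {y | t < infDist y C}
  have setIntegral_eq : ∀ ρ : Measure S, ∫ x in D, f x ∂ρ = ∫ x, f x ∂ρ := fun ρ =>
    setIntegral_eq_integral_of_forall_compl_eq_zero fun x hx =>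
      hzero x ((not_lt.1 hx).trans_lt htr)
  have : IsFiniteMeasure (μ.restrict D) :=
    isFiniteMeasure_restrict.2 (hD.2.1.measure_ne_top hμ)
  have : ∀ n, IsFiniteMeasure ((μn n).restrict D) := fun n =>
    isFiniteMeasure_restrict.2 (hD.2.1.measure_ne_top (hμn n))
  rw [← setIntegral_eq μ]
  refine .congr (fun n => setIntegral_eq (μn n)) ?_
  refine tendsto_integral_of_forall_isOpen_le_liminf hf.continuous hf0 hfM (fun G hG => ?_) ?_
  · simp_rw [Measure.restrict_apply hG.measurableSet]
    exact measure_le_liminf_of_isOpen_of_subset_compl hsm hμ hμn tendsto_real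
      (hG.inter (isOpen_setOf_lt_infDist C t)) (inter_subset_right.trans hD.2.1.subset_compl)
  · simpa only [measureReal_restrict_apply_univ] using tendsto_real D hD

/-- Convergence determining class: if `μ_n(A) → μ(A)` for every Borel `A ⊆ O` bounded
away from `C` with `μ(∂A) = 0` and `S(A) = A` (where `S(A) = {λx : x ∈ A, λ ≥ 1}`),
then `μ_n → μ` in `M_O`. -/
theorem stmt11 [BorelSpace S] [CompleteSpace S] [TopologicalSpace.SeparableSpace S]
    (C : Set S) (hC : IsClosed C) (sm : ℝ → S → S) (hsm : ScaleAxioms C sm)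
    (μ : Measure S) (μn : ℕ → Measure S)
    (hμ : MemMO C μ) (hμn : ∀ n, MemMO C (μn n))
    (h : ∀ A : Set S, MeasurableSet A → A ⊆ Cᶜ → BddAway C A → μ (frontier A) = 0 →
        {y | ∃ x ∈ A, ∃ l : ℝ, 1 ≤ l ∧ y = sm l x} = A →
        Tendsto (fun n => μn n A) atTop (𝓝 (μ A))) :
    MOTendsto C μn μ :=
  stmt11_general C sm hsm μ μn hμ hμn fun A ⟨hA, hAC, hμA, hSA⟩ =>
    h A hA hAC.subset_compl hAC hμA hSA
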